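/- Let τ be a matching of [2n] and let σ be a noncrossing partition of [n]. Then τ(σ) ≤ τ in the uncrossing order if and only if I_a(f_τ) ≤_a I_a(σ) for every a ∈ [2n], in the a-shifted dominance order. -/

import Mathlib

open Finset

noncomputable section
open scoped Classical

/-- The cyclic (clockwise) half-open interval `(a, b]` in `Fin m`. -/
def cIoc {m : ℕ} (a b : Fin m) : Finset (Fin m) :=
  univ.filter fun k => if a < b then a < k ∧ k ≤ b else a < k ∨ k ≤ b

/-- The open cyclic (clockwise) arc from `a` to `b` in `Fin m`, excluding both endpoints. -/
def cIoo {m : ℕ} (a b : Fin m) : Finset (Fin m) :=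
  univ.filter fun k => if a < b then a < k ∧ k < b else (a < k ∨ k < b) ∧ k ≠ a ∧ k ≠ b

/-- Set partitions of `[n] = Fin n`. -/
abbrev NCP (n : ℕ) := Finpartition (univ : Finset (Fin n))

/-- `a` and `b` lie in the same block of `σ`. -/
def sameBlock {n : ℕ} (σ : NCP n) (a b : Fin n) : Prop :=
  ∃ B ∈ σ.parts, a ∈ B ∧ b ∈ B

/-- `σ` is a noncrossing partition: there are no `a < b < c < d` with `a, c` in one
block and `b, d` in a different block. -/
def IsNoncrossing {n : ℕ} (σ : NCP n) : Prop :=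
  ∀ a b c d : Fin n, a < b → b < c → c < d →
    sameBlock σ a c → sameBlock σ b d → sameBlock σ a b

/-- The relation defining the dual (Kreweras complement) partition: `ĩ ~ j̃` iff no block
of `σ` meets both cyclic intervals `{(i+1), …, j}` and `{(j+1), …, i}`. -/
def dualRel {n : ℕ} (σ : NCP n) (i j : Fin n) : Prop :=
  i = j ∨ ¬ ∃ B ∈ σ.parts, (B ∩ cIoc i j).Nonempty ∧ (B ∩ cIoc j i).Nonempty

/-- The point `ī` of `[2n]` (0-based: `ī = 2i`). -/
def bar {n : ℕ} (i : Fin n) : Fin (2*n) := ⟨2*(i:ℕ), by have := i.isLt; omega⟩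

/-- The point `ĩ` of `[2n]` (0-based: `ĩ = 2i+1`). -/
def til {n : ℕ} (i : Fin n) : Fin (2*n) := ⟨2*(i:ℕ)+1, by have := i.isLt; omega⟩

/-- A matching (fixed-point-free involution) of `Fin m`. -/
def IsMatching {m : ℕ} (τ : Fin m → Fin m) : Prop :=
  Function.Involutive τ ∧ ∀ i, τ i ≠ i

/-- A noncrossing matching: there are no `a < b < c < d` with `τ a = c` and `τ b = d`. -/
def IsNCMatching {m : ℕ} (τ : Fin m → Fin m) : Prop :=
  ¬ ∃ a b c d : Fin m, a < b ∧ b < c ∧ c < d ∧ τ a = c ∧ τ b = d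

/-- `j` is the cyclic predecessor of `i` in the block of `σ` containing `i`
(`j = i` when `i` is a singleton). -/
def cyclicPred {n : ℕ} (σ : NCP n) (j i : Fin n) : Prop :=
  ∃ B ∈ σ.parts, i ∈ B ∧ j ∈ B ∧ ∀ x ∈ B, x ∉ cIoo j i

/-- `m` is the medial pairing of `σ`: it pairs `ī` (0-based `2i`) with `j̃` (0-based `2j+1`),
where `j` is the cyclic predecessor of `i` in its block. -/
def IsMedialOf {n : ℕ} (σ : NCP n) (m : Fin (2*n) → Fin (2*n)) : Prop :=
  ∀ i j : Fin n, m (bar i) = til j ↔ cyclicPred σ j i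

/-- The crossing number of a matching: the number of pairs `{a,b}` with
`a < b < τ a < τ b`. -/
def crossNum {m : ℕ} (τ : Fin m → Fin m) : ℕ :=
  ((univ : Finset (Fin m × Fin m)).filter fun p =>
    p.1 < p.2 ∧ p.2 < τ p.1 ∧ τ p.1 < τ p.2).card

/-- `a`, `b`, `c`, `d` are distinct and in cyclic order on `Fin m`. -/
def CyclicOrder4 {m : ℕ} (a b c d : Fin m) : Prop :=
  (a < b ∧ b < c ∧ c < d) ∨ (b < c ∧ c < d ∧ d < a) ∨
  (c < d ∧ d < a ∧ a < b) ∨ (d < a ∧ a < b ∧ b < c)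

/-- `τ` covers `τ'` in the uncrossing order. -/
def UncrossCover {m : ℕ} (τ' τ : Fin m → Fin m) : Prop :=
  IsMatching τ' ∧ IsMatching τ ∧
  ∃ a b c d : Fin m, CyclicOrder4 a b c d ∧ τ a = c ∧ τ b = d ∧
    (∀ x, x ≠ a → x ≠ b → x ≠ c → x ≠ d → τ' x = τ x) ∧
    ((τ' a = d ∧ τ' b = c ∧ ∀ x ∈ cIoo a b, τ x ∉ cIoo c d) ∨
     (τ' a = b ∧ τ' c = d ∧ ∀ x ∈ cIoo b c, τ x ∉ cIoo d a))

/-- The uncrossing partial order on matchings: reflexive-transitive closure of covers. -/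
def uncrossLE {m : ℕ} (τ' τ : Fin m → Fin m) : Prop :=
  Relation.ReflTransGen UncrossCover τ' τ

/-- An affine permutation of period `m`. -/
def IsAffinePerm (m : ℕ) (f : ℤ → ℤ) : Prop :=
  Function.Bijective f ∧ ∀ i : ℤ, f (i + m) = f i + m

/-- The length of an affine permutation of period `m`:
`#{(i,j) : 1 ≤ i ≤ m, i < j, f i > f j}`. -/
def affLen (m : ℕ) (f : ℤ → ℤ) : ℕ :=
  Set.ncard {p : ℤ × ℤ | 1 ≤ p.1 ∧ p.1 ≤ (m:ℤ) ∧ p.1 < p.2 ∧ f p.2 < f p.1}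

/-- The affine rank matrix `r_f(i,j) = #{a ≤ i : f a ≥ j}`. -/
def rankMat (f : ℤ → ℤ) (i j : ℤ) : ℕ :=
  Set.ncard {a : ℤ | a ≤ i ∧ j ≤ f a}

/-- Affine Bruhat order via rank matrices. -/
def bruhatLE (f g : ℤ → ℤ) : Prop := ∀ i j : ℤ, rankMat f i j ≤ rankMat g i j

/-- The sum `Σ_{i=1}^m (f i − i)`. -/
def windowSum (m : ℕ) (f : ℤ → ℤ) : ℤ :=
  ∑ i ∈ Finset.range m, (f ((i:ℤ)+1) - ((i:ℤ)+1))

/-- The affine permutation `g_τ` associated to a matching `τ` of `[2n]`: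
on `[2n]`, `g_τ i = τ i` if `τ i > i` and `g_τ i = τ i + 2n` if `τ i < i`,
extended periodically. -/
def gTau (n : ℕ) (τ : Fin (2*n) → Fin (2*n)) (i : ℤ) : ℤ :=
  if h : (i % ((2*n : ℕ) : ℤ)).toNat < 2*n then
    let r : Fin (2*n) := ⟨(i % ((2*n : ℕ) : ℤ)).toNat, h⟩
    (i - i % ((2*n : ℕ) : ℤ)) +
      (if r < τ r then ((τ r : ℕ) : ℤ) else ((τ r : ℕ) : ℤ) + 2*n)
  else i

/-- `f_τ = g_τ − 1`. -/
def fTau (n : ℕ) (τ : Fin (2*n) → Fin (2*n)) (i : ℤ) : ℤ := gTau n τ i - 1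

/-- An electrical affine permutation for `n`. -/
def IsElectrical (n : ℕ) (f : ℤ → ℤ) : Prop :=
  IsAffinePerm (2*n) f ∧
  (∀ i : ℤ, i ≤ f i ∧ f i ≤ i + 2*n - 2) ∧
  windowSum (2*n) f = ((n:ℤ) - 1) * (2*n) ∧
  ∀ i : ℤ, (f (f i + 1) - (i - 1)) % ((2*n : ℕ) : ℤ) = 0

/-- The Grassmann necklace subset `I_a(f) ⊆ [m]`: representatives in `[m]` (0-based) of
`{f b mod m : b < a and f b ≥ a}`. -/
def necklaceI (m : ℕ) (f : ℤ → ℤ) (a : ℤ) : Finset (Fin m) :=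
  univ.filter fun x => ∃ b : ℤ, b < a ∧ a ≤ f b ∧ f b % (m:ℤ) = ((x:ℕ):ℤ)

/-- The dual necklace subset `J_a(f) ⊆ [m]`: representatives in `[m]` (0-based) of
`{b mod m : b < a and f b ≥ a}`. -/
def necklaceJ (m : ℕ) (f : ℤ → ℤ) (a : ℤ) : Finset (Fin m) :=
  univ.filter fun x => ∃ b : ℤ, b < a ∧ a ≤ f b ∧ b % (m:ℤ) = ((x:ℕ):ℤ)

/-- Dominance order on `k`-element subsets of `Fin m`:
the `r`-th smallest element of `I` is at most the `r`-th smallest element of `J`. -/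
def domLE {m : ℕ} (k : ℕ) (I J : Finset (Fin m)) : Prop :=
  ∃ (hI : I.card = k) (hJ : J.card = k),
    ∀ r : Fin k, I.orderEmbOfFin hI r ≤ J.orderEmbOfFin hJ r

/-- `a`-shifted dominance order: rotate so that `a` becomes least, then compare. -/
def sdomLE {m : ℕ} (k : ℕ) (a : Fin m) (I J : Finset (Fin m)) : Prop :=
  domLE k (I.image (· - a)) (J.image (· - a))

/-- `a`-shifted lexicographic order on subsets of `Fin m`. -/
def lexLE {m : ℕ} (a : Fin m) (I J : Finset (Fin m)) : Prop :=
  I = J ∨ List.Lex (· < ·) ((I.image (· - a)).sort (· ≤ ·)) ((J.image (· - a)).sort (· ≤ ·))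

/-- A Catalan subset of `[2n]` (0-based): an `(n−1)`-subset such that the length-`2n`
word with `U` at positions `{0} ∪ {x+1 : x ∈ I}` and `D` elsewhere is a Dyck path. -/
def IsCatalan {n : ℕ} (I : Finset (Fin (2*n))) : Prop :=
  I.card = n - 1 ∧
  ∀ p : ℕ, p ≤ 2*n →
    p ≤ 2 * ((insert 0 (I.image fun x => (x:ℕ)+1)).filter (· < p)).card

/-- Catalan subset with respect to the shifted order `≤_a`. -/
def IsCatalanAt {n : ℕ} (a : Fin (2*n)) (I : Finset (Fin (2*n))) : Prop :=
  IsCatalan (I.image (· - a))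

/-- The set of maxima of `S` with respect to the `a`-shifted order. -/
def maxAt {m : ℕ} (a : Fin m) (S : Finset (Fin m)) : Finset (Fin m) :=
  S.filter fun x => ∀ y ∈ S, y - a ≤ x - a

/-- `I_a(σ)` for a noncrossing partition `σ`: the complement in `[2n]` of the set of
`≤_a`-maxima of the blocks of `σ` (embedded by `bar`) and of the blocks of the dual
partition `σ̃` (embedded by `til`). -/
def IaP {n : ℕ} (σ : NCP n) (a : Fin (2*n)) : Finset (Fin (2*n)) :=
  univ \ ((σ.parts.biUnion fun B => maxAt a (B.image bar)) ∪
          ((univ : Finset (Fin n)).biUnion fun i =>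
            maxAt a ((univ.filter (dualRel σ i)).image til)))

/-- `I` is concordant with `σ`: `I` has `n−1` elements and every block of `σ` and of
its dual `σ̃` contains exactly one element of `[2n] ∖ I`. -/
def Concordant {n : ℕ} (σ : NCP n) (I : Finset (Fin (2*n))) : Prop :=
  I.card = n - 1 ∧
  (∀ B ∈ σ.parts, ((B.image bar) ∩ (univ \ I)).card = 1) ∧
  (∀ i : Fin n, (((univ.filter (dualRel σ i)).image til) ∩ (univ \ I)).card = 1)

/-- `E(I)`: the set of noncrossing partitions concordant with `I`. -/
def ESet {n : ℕ} (I : Finset (Fin (2*n))) : Set (NCP n) :=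
  {σ | IsNoncrossing σ ∧ Concordant σ I}

/-- The maximal minor `Δ_I(X)` on the columns indexed by `I`, in increasing order. -/
def minorOn {k m : ℕ} (X : Matrix (Fin k) (Fin m) ℝ) (I : Finset (Fin m)) : ℝ :=
  if h : I.card = k then (X.submatrix id fun r => I.orderEmbOfFin h r).det else 0

/-- `X` is totally nonnegative: it has full rank `k` and all maximal minors are `≥ 0`. -/
def IsTNN {k m : ℕ} (X : Matrix (Fin k) (Fin m) ℝ) : Prop :=
  X.rank = k ∧ ∀ I : Finset (Fin m), I.card = k → 0 ≤ minorOn X I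

/-- `t` times the matrix unit `E_{p,q}` (0-based indices). -/
def matE (m : ℕ) (p q : ℕ) (t : ℝ) : Matrix (Fin m) (Fin m) ℝ :=
  Matrix.of fun r s => if (r:ℕ) = p ∧ (s:ℕ) = q then t else 0

/-- `x_i(t) = Id + t·E_{i,i+1}` (1-based index `i`). -/
def xB (m i : ℕ) (t : ℝ) : Matrix (Fin m) (Fin m) ℝ := 1 + matE m (i-1) i t

/-- `y_i(t) = Id + t·E_{i+1,i}` (1-based index `i`). -/
def yB (m i : ℕ) (t : ℝ) : Matrix (Fin m) (Fin m) ℝ := 1 + matE m i (i-1) t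

/-- `u_i(t) = x_i(t)·y_{i−1}(t)` (1-based index `i`). -/
def uB (m i : ℕ) (t : ℝ) : Matrix (Fin m) (Fin m) ℝ := xB m i t * yB m (i-1) t

/-- The columns of `X`, extended `n`-periodically to all integer indices (0-based). -/
def colP {k n : ℕ} (X : Matrix (Fin k) (Fin n) ℝ) (i : ℤ) : Fin k → ℝ :=
  fun r => if h : (i % (n:ℤ)).toNat < n then X r ⟨(i % (n:ℤ)).toNat, h⟩ else 0

/-- `f_X(i) = min { j ≥ i : v_i ∈ span(v_{i+1}, …, v_j) }` (0-based columns). -/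
def fX {k n : ℕ} (X : Matrix (Fin k) (Fin n) ℝ) (i : ℤ) : ℤ :=
  sInf {j : ℤ | i ≤ j ∧ colP X i ∈ Submodule.span ℝ (colP X '' Set.Ioc i j)}

/-- Fintype instance for finite partitions of a finite set. -/
instance {α : Type*} [DecidableEq α] [Fintype α] (s : Finset α) : Fintype (Finpartition s) :=
  Fintype.ofInjective Finpartition.parts fun _ _ h => Finpartition.ext h

/-- The sorted list of (the values of) a subset of `Fin m`. -/
def sortedL {m : ℕ} (I : Finset (Fin m)) : List ℕ :=
  (I.sort (· ≤ ·)).map Fin.val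

/-- The number of inversions of a list (= the number of adjacent transpositions
needed to sort it, when entries are distinct). -/
def invNum (l : List ℕ) : ℕ :=
  ((Finset.range l.length ×ˢ Finset.range l.length).filter fun pq =>
    pq.1 < pq.2 ∧ l.getD pq.2 0 < l.getD pq.1 0).card

/-- The subset of `Fin m` whose values lie in the list `l`. -/
def toFinF {m : ℕ} (l : List ℕ) : Finset (Fin m) :=
  univ.filter fun x => (x:ℕ) ∈ l

/-- The double sum `Σ_{σ ∈ E(l), κ ∈ E(l')} L σ · L κ`, where `E` of a list with a
repeated entry (or an out-of-range entry) is empty. -/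
def pairSum {n : ℕ} (L : NCP n → ℝ) (l l' : List ℕ) : ℝ :=
  if (l.Nodup ∧ ∀ x ∈ l, x < 2*n) ∧ (l'.Nodup ∧ ∀ x ∈ l', x < 2*n) then
    ∑ᶠ σ ∈ ESet (n := n) (toFinF l), ∑ᶠ κ ∈ ESet (n := n) (toFinF l'), L σ * L κ
  else 0

/-- The list obtained from `LI` by replacing its entries at the positions in `S`
(in increasing order of position) by the first `#S` entries of `LJ`. -/
def swapI (LI LJ : List ℕ) (S : Finset ℕ) : List ℕ :=
  (List.range LI.length).map fun p =>
    if p ∈ S then LJ.getD ((S.filter (· < p)).card) 0 else LI.getD p 0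

/-- The list obtained from `LJ` by replacing its first `#S` entries by the entries of
`LI` at the positions in `S`, in increasing order. -/
def swapJ (LI LJ : List ℕ) (S : Finset ℕ) : List ℕ :=
  (List.range LJ.length).map fun p =>
    if p < S.card then LI.getD ((S.sort (· ≤ ·)).getD p 0) 0 else LJ.getD p 0

/-!
For a matching `τ` of `[N]` and a cyclic arc `S`, let `cut τ S` be the number of pairs of `τ` with
exactly one endpoint in `S`. Uncrossing two pairs never increases a cut number and lowers by two
those of the arcs separating the new pairs. Hence `m ≤ τ` implies `cut m S ≤ cut τ S` for every
arc `S`. Conversely, let `m` be noncrossing and below `τ` on all arcs. If both ways of uncrossing a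
crossing of `τ` violated the inequality, on arcs `P` and `Q` say, then by parity `cut m = cut τ`
on `P` and `Q`, and submodularity applied to `P, Q` and to `P, Qᶜ` would produce two crossing pairs
of `m`. So one can always descend from `τ` while staying above `m`.

Read clockwise from `a`, each pair has an opener and a closer, and the cut number of an arc starting
at `a` determines the number of openers in it. The openers other than `a`, shifted by one step, form
`I_a(f_τ)`, so comparing cut numbers is the same as comparing these sets in the shifted dominance
orders. Finally, `x` is the `≤_a`-maximum of its block of `σ` or of `σ̃` exactly when its cyclic
successor in that block is not after `x`, and the medial pairing sends `x + 1` to this successor; so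
`I_a(σ)` is the set attached in this way to the medial pairing of `σ`.
-/

theorem card_eq_of_involutive {α : Type*} {τ : α → α} (hτ : τ.Involutive) {S T : Finset α}
    (h : ∀ i, i ∈ S ↔ τ i ∈ T) : #S = #T :=
  card_nbij' τ τ (fun i => (h i).1) (fun i hi => (h _).2 ((hτ i).symm ▸ hi)) (fun i _ => hτ i)
    fun i _ => hτ i

section Cut

variable {α : Type*} [DecidableEq α]

/-- The cut number of `S`: for a matching `τ`, the number of pairs of `τ` joining `S` to its
complement. -/
def cut (τ : α → α) (S : Finset α) : ℕ := #{i ∈ S | τ i ∉ S}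

theorem cut_eq_zero_iff {τ : α → α} {S : Finset α} : cut τ S = 0 ↔ ∀ i ∈ S, τ i ∈ S := by
  simp [cut, filter_eq_empty_iff]

theorem cut_add_cut (τ : α → α) (P Q : Finset α) :
    cut τ P + cut τ Q = cut τ (P ∩ Q) + cut τ (P ∪ Q) +
      (#{i ∈ P \ Q | τ i ∈ Q \ P} + #{i ∈ Q \ P | τ i ∈ P \ Q}) := by
  have card_eq_sum (S : Finset α) (p : α → Prop) [DecidablePred p] (hS : S ⊆ P ∪ Q) :
      #{i ∈ S | p i} = ∑ i ∈ P ∪ Q, if i ∈ S ∧ p i then 1 else 0 := by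
    rw [← card_filter]
    congr 1
    grind
  simp only [cut]
  rw [card_eq_sum P _ (by grind), card_eq_sum Q _ (by grind), card_eq_sum (P ∩ Q) _ (by grind),
    card_eq_sum (P ∪ Q) _ (by grind), card_eq_sum (P \ Q) _ (by grind),
    card_eq_sum (Q \ P) _ (by grind)]
  simp only [← sum_add_distrib]
  refine sum_congr rfl fun i hi => ?_
  rw [mem_union] at hi
  by_cases i ∈ P <;> by_cases i ∈ Q <;> by_cases τ i ∈ P <;> by_cases τ i ∈ Q <;> simp_all

variable {τ : α → α}

theorem cut_inter_add_cut_union_lt_iff (hτ : τ.Involutive) {P Q : Finset α} :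
    cut τ (P ∩ Q) + cut τ (P ∪ Q) < cut τ P + cut τ Q ↔ ∃ u ∈ P \ Q, τ u ∈ Q \ P := by
  rw [cut_add_cut τ P, lt_add_iff_pos_right, Nat.add_pos_iff_pos_or_pos, card_pos, card_pos]
  simp only [Finset.Nonempty, mem_filter]
  refine or_iff_left_of_imp ?_
  rintro ⟨u, hu, hτu⟩
  exact ⟨τ u, hτu, by rwa [hτ u]⟩

theorem cut_compl [Fintype α] (hτ : τ.Involutive) (S : Finset α) : cut τ Sᶜ = cut τ S :=
  card_eq_of_involutive hτ (by simp [hτ _, and_comm])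

theorem card_eq_cut_add {β : Type*} [LinearOrder β] (hτ : τ.Involutive) (hne : ∀ i, τ i ≠ i)
    {κ : α → β} (hκ : κ.Injective) (S : Finset α) :
    #S = cut τ S + 2 * #{i ∈ S | τ i ∈ S ∧ κ i < κ (τ i)} := by
  have lower_eq_upper : #{i ∈ S | τ i ∈ S ∧ κ i < κ (τ i)} =
      #{i ∈ S | τ i ∈ S ∧ κ (τ i) < κ i} :=
    card_eq_of_involutive hτ (by simp [hτ _, and_left_comm])
  have partition : ({i ∈ S | τ i ∈ S} : Finset α) =
      {i ∈ S | τ i ∈ S ∧ κ i < κ (τ i)} ∪ {i ∈ S | τ i ∈ S ∧ κ (τ i) < κ i} := by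
    ext i
    have := hκ.ne (hne i)
    grind
  have disj : Disjoint ({i ∈ S | τ i ∈ S ∧ κ i < κ (τ i)} : Finset α)
      {i ∈ S | τ i ∈ S ∧ κ (τ i) < κ i} :=
    disjoint_filter.2 fun i _ h h' => h.2.asymm h'.2
  have := card_filter_add_card_filter_not (s := S) (fun i => τ i ∈ S)
  rw [partition, card_union_of_disjoint disj, ← lower_eq_upper] at this
  unfold cut
  omega

theorem cut_modEq (hτ : τ.Involutive) (hne : ∀ i, τ i ≠ i) {τ' : α → α} (hτ' : τ'.Involutive)
    (hne' : ∀ i, τ' i ≠ i) [LinearOrder α] (S : Finset α) : cut τ S ≡ cut τ' S [MOD 2] := by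
  have h := card_eq_cut_add hτ hne Function.injective_id S
  have h' := card_eq_cut_add hτ' hne' Function.injective_id S
  unfold Nat.ModEq
  omega

/-- The two pairs of the matching `τ` at `a` and `b` are replaced by `{a, τ b}` and `{b, τ a}`:
the elementary move of the uncrossing order. -/
def uncross (τ : α → α) (a b : α) : α → α := Equiv.swap a b ∘ τ ∘ Equiv.swap a b

theorem uncross_of_ne {a b x : α} (ha : x ≠ a) (hb : x ≠ b) (hτa : τ x ≠ a) (hτb : τ x ≠ b) :
    uncross τ a b x = τ x := by
  simp [uncross, Equiv.swap_apply_of_ne_of_ne, *]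

theorem uncross_left {a b : α} (ha : τ b ≠ a) (hb : τ b ≠ b) : uncross τ a b a = τ b := by
  simp [uncross, Equiv.swap_apply_of_ne_of_ne, *]

theorem uncross_right {a b : α} (ha : τ a ≠ a) (hb : τ a ≠ b) : uncross τ a b b = τ a := by
  simp [uncross, Equiv.swap_apply_of_ne_of_ne, *]

theorem uncross_involutive (hτ : τ.Involutive) (a b : α) : (uncross τ a b).Involutive := by
  intro x
  simp [uncross, hτ _]

theorem uncross_ne (hne : ∀ i, τ i ≠ i) (a b i : α) : uncross τ a b i ≠ i := by
  intro h
  rw [uncross, Function.comp_apply, Equiv.swap_apply_eq_iff] at h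
  exact hne _ h

theorem cut_uncross_add (hτ : τ.Involutive) (hne : ∀ i, τ i ≠ i) {a b : α}
    (hab : a ≠ b) (hab' : τ a ≠ b) (S : Finset α) :
    cut (uncross τ a b) S +
        ((if a ∈ S ↔ τ a ∈ S then 0 else 1) + (if b ∈ S ↔ τ b ∈ S then 0 else 1)) =
      cut τ S + ((if a ∈ S ↔ τ b ∈ S then 0 else 1) + (if b ∈ S ↔ τ a ∈ S then 0 else 1)) := by
  have hba : τ b ≠ a := fun h => hab' (by rw [← h, hτ])
  have hττ : τ a ≠ τ b := hτ.injective.ne hab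
  set T : Finset α := {a, b, τ a, τ b} with hT
  have cut_eq_sum (ρ : α → α) : cut ρ S = ∑ i ∈ (S ∪ T) \ T, (if i ∈ S ∧ ρ i ∉ S then 1 else 0) +
      ∑ i ∈ T, if i ∈ S ∧ ρ i ∉ S then 1 else 0 := by
    rw [sum_sdiff subset_union_right, ← card_filter, cut]
    congr 1
    grind
  have sum_T (f : α → ℕ) : ∑ i ∈ T, f i = f a + (f b + (f (τ a) + f (τ b))) := by
    rw [hT, sum_insert (by simp [hab, hba.symm, (hne a).symm]),
      sum_insert (by simp [hab'.symm, (hne b).symm]), sum_pair hττ]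
  have agree : ∀ i ∈ (S ∪ T) \ T, uncross τ a b i = τ i := by
    intro i hi
    simp only [hT, mem_sdiff, mem_insert, mem_singleton, not_or] at hi
    exact uncross_of_ne hi.2.1 hi.2.2.1 (fun h => hi.2.2.2.1 (by rw [← h, hτ]))
      fun h => hi.2.2.2.2 (by rw [← h, hτ])
  have ha : uncross τ a b a = τ b := uncross_left hba (hne b)
  have hb : uncross τ a b b = τ a := uncross_right (hne a) hab'
  have hτa : uncross τ a b (τ a) = b := by rw [← hb, uncross_involutive hτ]
  have hτb : uncross τ a b (τ b) = a := by rw [← ha, uncross_involutive hτ]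
  have rest : ∑ i ∈ (S ∪ T) \ T, (if i ∈ S ∧ uncross τ a b i ∉ S then 1 else 0) =
      ∑ i ∈ (S ∪ T) \ T, if i ∈ S ∧ τ i ∉ S then 1 else 0 :=
    sum_congr rfl fun i hi => by rw [agree i hi]
  rw [cut_eq_sum, cut_eq_sum τ, rest, sum_T, sum_T, ha, hb, hτa, hτb, hτ a, hτ b]
  by_cases a ∈ S <;> by_cases b ∈ S <;> by_cases τ a ∈ S <;> by_cases τ b ∈ S <;>
    simp [*]

end Cut

section Arc

variable {N : ℕ}

theorem fin_sub_le_sub_iff {a x y : Fin N} :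
    x - a ≤ y - a ↔ a ≤ x ∧ x ≤ y ∨ x ≤ y ∧ y < a ∨ y < a ∧ a ≤ x := by
  have hval (z : Fin N) : ((z - a : Fin N) : ℕ) = if a ≤ z then (z : ℕ) - a else N + z - a := by
    split_ifs with h
    · exact Fin.sub_val_of_le h
    · exact Fin.coe_sub_iff_lt.2 (not_le.1 h)
  rw [Fin.le_def, hval, hval]
  split_ifs <;> omega

theorem fin_sub_injective (a : Fin N) : Function.Injective (· - a) :=
  haveI : NeZero N := ⟨a.pos.ne'⟩
  sub_left_injective

theorem fin_sub_self_lt {a b : Fin N} (h : a ≠ b) : a - a < b - a := by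
  rw [← not_le, fin_sub_le_sub_iff]
  omega

theorem CyclicOrder4.rotate {a b c d : Fin N} (h : CyclicOrder4 a b c d) :
    CyclicOrder4 b c d a := by
  unfold CyclicOrder4 at *
  omega

theorem cyclicOrder4_iff {a b c d : Fin N} :
    CyclicOrder4 a b c d ↔ a ≠ b ∧ b - a < c - a ∧ c - a < d - a := by
  simp only [← not_le, fin_sub_le_sub_iff]
  unfold CyclicOrder4
  omega

theorem mem_cIoo {a b x : Fin N} : x ∈ cIoo a b ↔ a - b < x - b := by
  rw [← not_le, fin_sub_le_sub_iff]
  simp only [cIoo, mem_filter_univ]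
  split_ifs <;> omega

theorem mem_cIoo_iff_of_sub_lt {a c d x : Fin N} (h : c - a < d - a) :
    x ∈ cIoo c d ↔ c - a < x - a ∧ x - a < d - a := by
  rw [mem_cIoo]
  simp only [← not_le, fin_sub_le_sub_iff] at *
  omega

theorem mem_maxAt_iff_of_gap {S : Finset (Fin N)} {x w : Fin N} (hx : x ∈ S) (hw : w ∈ S)
    (gap : ∀ y ∈ S, y ∉ cIoo x w) (a : Fin N) : x ∈ maxAt a S ↔ w - a ≤ x - a := by
  rw [maxAt, mem_filter]
  refine ⟨fun h => h.2 w hw, fun h => ⟨hx, fun y hy => ?_⟩⟩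
  have := gap y hy
  rw [mem_cIoo, not_lt] at this
  rw [fin_sub_le_sub_iff] at *
  omega

/-- The closed cyclic arc running clockwise from `a` to `b`. -/
def cIcc (a b : Fin N) : Finset (Fin N) := univ.filter fun x => x - a ≤ b - a

theorem mem_cIcc {a b x : Fin N} : x ∈ cIcc a b ↔ x - a ≤ b - a := mem_filter_univ x

/-- Cyclic arcs of `Fin N`, including `∅` and `univ`, encoded as the subsets whose membership never
alternates along four points in cyclic order. -/
def IsArc (S : Finset (Fin N)) : Prop :=
  ∀ a b c d, CyclicOrder4 a b c d → a ∈ S → c ∈ S → b ∈ S ∨ d ∈ S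

theorem left_mem_cIcc (a b : Fin N) : a ∈ cIcc a b := by
  rw [mem_cIcc, fin_sub_le_sub_iff]
  omega

theorem right_mem_cIcc (a b : Fin N) : b ∈ cIcc a b := mem_cIcc.2 le_rfl

theorem isArc_cIcc (a b : Fin N) : IsArc (cIcc a b) := by
  intro p q r s h
  simp only [mem_cIcc, fin_sub_le_sub_iff]
  unfold CyclicOrder4 at h
  omega

theorem IsArc.eq_cIcc {S : Finset (Fin N)} (hS : IsArc S) (hne : S.Nonempty) (hS' : S ≠ univ) :
    ∃ a b, S = cIcc a b := by
  obtain ⟨o, ho⟩ : ∃ o, o ∉ S := by simpa [eq_univ_iff_forall] using hS'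
  obtain ⟨a, ha, first⟩ := S.exists_min_image (· - o) hne
  obtain ⟨b, hb, last⟩ := S.exists_max_image (· - o) hne
  simp only [fin_sub_le_sub_iff] at first last
  refine ⟨a, b, ext fun x => ⟨fun hx => ?_, fun hx => ?_⟩⟩
  · have := first x hx
    have := last x hx
    have := ne_of_mem_of_not_mem hx ho
    rw [mem_cIcc, fin_sub_le_sub_iff]
    omega
  · by_contra hxS
    have := first b hb
    have := ne_of_mem_of_not_mem ha hxS
    have := ne_of_mem_of_not_mem hb hxS
    have := ne_of_mem_of_not_mem ha ho
    have := ne_of_mem_of_not_mem hb ho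
    rw [mem_cIcc, fin_sub_le_sub_iff] at hx
    have order : CyclicOrder4 a x b o := by
      unfold CyclicOrder4
      omega
    exact (hS a x b o order ha hb).elim hxS ho

theorem IsArc.compl {S : Finset (Fin N)} (hS : IsArc S) : IsArc Sᶜ := by
  intro a b c d h ha hc
  have := hS b c d a h.rotate
  simp only [mem_compl] at *
  tauto

theorem IsArc.inter {S T : Finset (Fin N)} (hS : IsArc S) (hT : IsArc T) {o : Fin N}
    (ho : o ∉ S ∪ T) : IsArc (S ∩ T) := by
  intro a b c d h ha hc
  rw [mem_inter] at ha hc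
  rw [mem_union, not_or] at ho
  have hoa := (ne_of_mem_of_not_mem ha.1 ho.1).symm
  have hoc := (ne_of_mem_of_not_mem hc.1 ho.1).symm
  have position : CyclicOrder4 a o c d ∨ CyclicOrder4 a b c o := by
    simp only [cyclicOrder4_iff] at h ⊢
    rcases lt_or_gt_of_ne ((fin_sub_injective a).ne hoc) with hlt | hlt
    · exact .inl ⟨hoa.symm, hlt, h.2.2⟩
    · exact .inr ⟨h.1, h.2.1, hlt⟩
  have := hS a b c d h ha.1 hc.1
  have := hT a b c d h ha.2 hc.2
  rcases position with h' | h'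
  · have := hS a o c d h' ha.1 hc.1
    have := hT a o c d h' ha.2 hc.2
    grind
  · have := hS a b c o h' ha.1 hc.1
    have := hT a b c o h' ha.2 hc.2
    grind

theorem IsArc.union {S T : Finset (Fin N)} (hS : IsArc S) (hT : IsArc T)
    (h : (S ∩ T).Nonempty) : IsArc (S ∪ T) := by
  obtain ⟨o, ho⟩ := h
  rw [← compl_compl (S ∪ T), compl_union]
  exact (hS.compl.inter hT.compl (o := o) (by simp_all)).compl

theorem cyclicOrder4_or {a b c d : Fin N} (hab : a ≠ b) (hac : a ≠ c) (had : a ≠ d) (hbc : b ≠ c)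
    (hbd : b ≠ d) (hcd : c ≠ d) :
    CyclicOrder4 a b c d ∨ CyclicOrder4 a b d c ∨ CyclicOrder4 a c b d ∨
      CyclicOrder4 a c d b ∨ CyclicOrder4 a d b c ∨ CyclicOrder4 a d c b := by
  have := (fin_sub_injective a).ne hbc
  have := (fin_sub_injective a).ne hbd
  have := (fin_sub_injective a).ne hcd
  simp only [cyclicOrder4_iff]
  generalize b - a = x, c - a = y, d - a = z at *
  grind

theorem cyclicOrder4_of_isArc {P Q : Finset (Fin N)} (hP : IsArc P) (hQ : IsArc Q)
    {a b c d : Fin N} (ha : a ∈ P \ Q) (hb : b ∈ P ∩ Q) (hc : c ∈ Q \ P) (hd : d ∉ P ∪ Q) :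
    CyclicOrder4 a b c d ∨ CyclicOrder4 a d c b := by
  simp only [mem_sdiff, mem_inter, mem_union, not_or] at ha hb hc hd
  rcases cyclicOrder4_or (ne_of_mem_of_not_mem hb.2 ha.2).symm
    (ne_of_mem_of_not_mem hc.1 ha.2).symm (ne_of_mem_of_not_mem ha.1 hd.1)
    (ne_of_mem_of_not_mem hb.1 hc.2) (ne_of_mem_of_not_mem hb.1 hd.1)
    (ne_of_mem_of_not_mem hc.1 hd.2) with h | h | h | h | h | h
  · exact .inl h
  · have := hQ _ _ _ _ h.rotate hb.2 hc.1
    tauto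
  · have := hP _ _ _ _ h ha.1 hb.1
    tauto
  · have := hQ _ _ _ _ h.rotate hc.1 hb.2
    tauto
  · have := hP _ _ _ _ h ha.1 hb.1
    tauto
  · exact .inr h

end Arc

section Uncrossing

variable {N : ℕ} {m τ : Fin N → Fin N} {a b : Fin N}

theorem cut_uncross_of_isArc (hτ : IsMatching τ) (h : CyclicOrder4 a b (τ a) (τ b))
    {S : Finset (Fin N)} (hS : IsArc S) :
    cut (uncross τ a b) S +
        (if (τ b ∈ S ↔ a ∈ S) ∧ (τ a ∈ S ↔ b ∈ S) ∧ (b ∈ S ↔ a ∉ S) then 2 else 0) =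
      cut τ S := by
  have hab : a ≠ b := (cyclicOrder4_iff.1 h).1
  have hab' : b ≠ τ a := (cyclicOrder4_iff.1 h.rotate).1
  have count := cut_uncross_add hτ.1 hτ.2 hab hab'.symm S
  have alt₁ := hS _ _ _ _ h
  have alt₂ := hS _ _ _ _ h.rotate
  by_cases a ∈ S <;> by_cases b ∈ S <;> by_cases τ a ∈ S <;> by_cases τ b ∈ S <;> simp_all

theorem isMatching_uncross (hτ : IsMatching τ) (a b : Fin N) : IsMatching (uncross τ a b) :=
  ⟨uncross_involutive hτ.1 a b, uncross_ne hτ.2 a b⟩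

theorem eq_uncross (hτ : IsMatching τ) (hm : IsMatching m) (h : CyclicOrder4 a b (τ a) (τ b))
    (ha : m a = τ b) (hb : m b = τ a)
    (agree : ∀ x, x ≠ a → x ≠ b → x ≠ τ a → x ≠ τ b → m x = τ x) : m = uncross τ a b := by
  have hab' : b ≠ τ a := (cyclicOrder4_iff.1 h.rotate).1
  have hba : τ b ≠ a := (cyclicOrder4_iff.1 h.rotate.rotate.rotate).1
  have ua : uncross τ a b a = τ b := uncross_left hba (hτ.2 b)
  have ub : uncross τ a b b = τ a := uncross_right (hτ.2 a) hab'.symm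
  funext x
  by_cases hxa : x = a
  · rw [hxa, ha, ua]
  by_cases hxb : x = b
  · rw [hxb, hb, ub]
  by_cases hxτa : x = τ a
  · rw [hxτa, ← ub, uncross_involutive hτ.1, ub, ← hb, hm.1]
  by_cases hxτb : x = τ b
  · rw [hxτb, ← ua, uncross_involutive hτ.1, ua, ← ha, hm.1]
  rw [agree x hxa hxb hxτa hxτb, uncross_of_ne hxa hxb (fun h => hxτa (by rw [← h, hτ.1]))
    fun h => hxτb (by rw [← h, hτ.1])]

theorem uncrossCover_iff : UncrossCover m τ ↔ IsMatching τ ∧ ∃ a b, CyclicOrder4 a b (τ a) (τ b) ∧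
    (∀ x ∈ cIoo a b, τ x ∉ cIoo (τ a) (τ b)) ∧ m = uncross τ a b := by
  constructor
  · rintro ⟨hm, hτ, a, b, _, _, h, rfl, rfl, agree, ⟨ha, hb, free⟩ | ⟨ha, hτa, free⟩⟩
    · exact ⟨hτ, a, b, h, free, eq_uncross hτ hm h ha hb agree⟩
    · have h' : CyclicOrder4 b (τ a) (τ b) (τ (τ a)) := by rw [hτ.1]; exact h.rotate
      refine ⟨hτ, b, τ a, h', by rwa [hτ.1], eq_uncross hτ hm h' ?_ hτa ?_⟩
      · rw [hτ.1, ← ha, hm.1]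
      · rw [hτ.1]
        tauto
  · rintro ⟨hτ, a, b, h, free, rfl⟩
    refine ⟨isMatching_uncross hτ a b, hτ, a, b, τ a, τ b, h, rfl, rfl, ?_, .inl ⟨?_, ?_, free⟩⟩
    · exact fun x ha hb hτa hτb => uncross_of_ne ha hb (fun h => hτa (by rw [← h, hτ.1]))
        fun h => hτb (by rw [← h, hτ.1])
    · exact uncross_left (cyclicOrder4_iff.1 h.rotate.rotate.rotate).1 (hτ.2 b)
    · exact uncross_right (hτ.2 a) (cyclicOrder4_iff.1 h.rotate).1.symm

/-- Every arc is cut by `m` at most as often as by `τ`. -/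
def ArcCutLE (m τ : Fin N → Fin N) : Prop := ∀ S, IsArc S → cut m S ≤ cut τ S

theorem UncrossCover.arcCutLE (h : UncrossCover m τ) : ArcCutLE m τ := by
  obtain ⟨hτ, a, b, hab, -, rfl⟩ := uncrossCover_iff.1 h
  intro S hS
  rw [← cut_uncross_of_isArc hτ hab hS]
  exact Nat.le_add_right _ _

theorem uncrossLE.arcCutLE (h : uncrossLE m τ) : ArcCutLE m τ := by
  induction h with
  | refl => exact fun S _ => le_rfl
  | tail _ cover ih => exact fun S hS => (ih S hS).trans (cover.arcCutLE S hS)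

/-- The inequality `ArcCutLE m τ` is strict on the arcs separating `{a, τ b}` from `{b, τ a}`, which
are the arcs whose cut number drops in `uncross τ a b`. -/
def HasSlack (m τ : Fin N → Fin N) (a b : Fin N) : Prop :=
  ∀ S, IsArc S → a ∈ S → τ b ∈ S → b ∉ S → τ a ∉ S → cut m S < cut τ S

theorem ArcCutLE.uncross (hle : ArcCutLE m τ) (hm : IsMatching m) (hτ : IsMatching τ)
    (h : CyclicOrder4 a b (τ a) (τ b)) (slack : HasSlack m τ a b) :
    ArcCutLE m (uncross τ a b) := by
  intro S hS
  have drop := cut_uncross_of_isArc hτ h hS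
  have parity := cut_modEq hm.1 hm.2 hτ.1 hτ.2 S
  split_ifs at drop with hsep
  · have strict : cut m S < cut τ S := by
      by_cases ha : a ∈ S
      · exact slack S hS ha (by tauto) (by tauto) (by tauto)
      · rw [← cut_compl hm.1 S, ← cut_compl hτ.1 S]
        apply slack Sᶜ hS.compl <;> simp only [mem_compl] <;> tauto
    unfold Nat.ModEq at parity
    omega
  · exact (hle S hS).trans_eq drop.symm

theorem IsNCMatching.not_cyclicOrder4 (hnc : IsNCMatching m) (hm : IsMatching m) (u v : Fin N) :
    ¬ CyclicOrder4 u v (m u) (m v) := by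
  have no_linear (x y : Fin N) : ¬ (x < y ∧ y < m x ∧ m x < m y) :=
    fun h => hnc ⟨x, y, m x, m y, h.1, h.2.1, h.2.2, rfl, rfl⟩
  have h₁ := no_linear u v
  have h₂ := no_linear v (m u)
  have h₃ := no_linear (m u) (m v)
  have h₄ := no_linear (m v) u
  rw [hm.1] at h₂ h₃ h₄
  rw [hm.1] at h₃
  unfold CyclicOrder4
  tauto

/-- Submodularity of `cut` is strict for `τ`, hence also for `m`, which agrees with `τ` on `P` and
`Q` and is below it on `P ∩ Q` and `P ∪ Q`. -/
theorem ArcCutLE.exists_mem_sdiff (hle : ArcCutLE m τ) (hm : IsMatching m) (hτ : IsMatching τ)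
    {P Q : Finset (Fin N)} (hinter : IsArc (P ∩ Q)) (hunion : IsArc (P ∪ Q))
    (tightP : cut τ P ≤ cut m P) (tightQ : cut τ Q ≤ cut m Q)
    (joined : ∃ u ∈ P \ Q, τ u ∈ Q \ P) : ∃ u ∈ P \ Q, m u ∈ Q \ P := by
  rw [← cut_inter_add_cut_union_lt_iff hm.1]
  have strict := (cut_inter_add_cut_union_lt_iff hτ.1).2 joined
  have := hle _ hinter
  have := hle _ hunion
  omega

theorem ArcCutLE.hasSlack_or (hle : ArcCutLE m τ) (hm : IsMatching m) (hnc : IsNCMatching m)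
    (hτ : IsMatching τ) (a b : Fin N) : HasSlack m τ a b ∨ HasSlack m τ b (τ a) := by
  by_contra hno
  simp only [HasSlack, not_or, not_forall, not_lt, exists_prop, hτ.1 a] at hno
  obtain ⟨⟨P, hP, haP, hτbP, hbP, hτaP, tightP⟩, Q, hQ, hbQ, haQ, hτaQ, hτbQ, tightQ⟩ := hno
  obtain ⟨u, hu, hmu⟩ := hle.exists_mem_sdiff (P := P) (Q := Q) hm hτ
    (hP.inter hQ (o := τ a) (by simp [*])) (hP.union hQ ⟨a, by simp [*]⟩) tightP tightQ
    ⟨τ b, by simp [*], by simp [hτ.1 b, *]⟩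
  obtain ⟨v, hv, hmv⟩ := hle.exists_mem_sdiff (P := P) (Q := Qᶜ) hm hτ
    (hP.inter hQ.compl (o := b) (by simp [*])) (hP.union hQ.compl ⟨τ b, by simp [*]⟩) tightP
    (by rwa [cut_compl hτ.1, cut_compl hm.1]) ⟨a, by simp [*], by simp [*]⟩
  rw [sdiff_compl] at hv
  rcases cyclicOrder4_of_isArc hP hQ hu hv hmu (d := m v) (by simp_all) with cross | cross
  · exact hnc.not_cyclicOrder4 hm u v cross
  · exact hnc.not_cyclicOrder4 hm v u cross.rotate.rotate.rotate

/-- A shortest choice of `(a, b)` excludes the pairs forbidden by `UncrossCover`: such a pair would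
have an endpoint `x` in `(a, b)`, and `x` could replace `b`. -/
theorem exists_uncrossCover_of_hasSlack (hτ : IsMatching τ)
    (h : CyclicOrder4 a b (τ a) (τ b)) (slack : HasSlack m τ a b) :
    ∃ b, CyclicOrder4 a b (τ a) (τ b) ∧ HasSlack m τ a b ∧ UncrossCover (uncross τ a b) τ := by
  obtain ⟨b, hb, shortest⟩ := exists_min_image
    (univ.filter fun b => CyclicOrder4 a b (τ a) (τ b) ∧ HasSlack m τ a b) (· - a)
    ⟨b, by simp [*]⟩
  simp only [mem_filter_univ, and_imp] at hb shortest
  refine ⟨b, hb.1, hb.2, uncrossCover_iff.2 ⟨hτ, a, b, hb.1, fun x hx hτx => ?_, rfl⟩⟩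
  obtain ⟨hab, hbc, hcd⟩ := cyclicOrder4_iff.1 hb.1
  rw [mem_cIoo_iff_of_sub_lt hcd] at hτx
  rw [mem_cIoo_iff_of_sub_lt (a := a) (fin_sub_self_lt hab)] at hx
  have hxa : a ≠ x := fun h => (h ▸ hx.1).false
  have cross : CyclicOrder4 a x (τ a) (τ x) :=
    cyclicOrder4_iff.2 ⟨hxa, hx.2.trans hbc, hτx.1⟩
  refine (shortest x cross fun S hS ha hτxS hxS hτaS => hb.2 S hS ha ?_ ?_ hτaS).not_gt hx.2
  · have order : CyclicOrder4 a x (τ x) (τ b) :=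
      cyclicOrder4_iff.2 ⟨hxa, (hx.2.trans hbc).trans hτx.1, hτx.2⟩
    exact (hS _ _ _ _ order ha hτxS).resolve_left hxS
  · have order : CyclicOrder4 a x b (τ a) := cyclicOrder4_iff.2 ⟨hxa, hx.2, hbc⟩
    exact fun hbS => (hS _ _ _ _ order ha hbS).elim hxS hτaS

theorem UncrossCover.sum_cut_lt (h : UncrossCover m τ) :
    ∑ S with IsArc S, cut m S < ∑ S with IsArc S, cut τ S := by
  obtain ⟨hτ, a, b, hab, -, rfl⟩ := uncrossCover_iff.1 h
  refine sum_lt_sum (fun S hS => h.arcCutLE S (by simpa using hS)) ⟨cIcc (τ b) a, ?_, ?_⟩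
  · simpa using isArc_cIcc _ _
  · rw [← cut_uncross_of_isArc hτ hab (isArc_cIcc (τ b) a), if_pos]
    · exact Nat.lt_add_of_pos_right two_pos
    · simp only [mem_cIcc, fin_sub_le_sub_iff]
      unfold CyclicOrder4 at hab
      omega

theorem ArcCutLE.eq_of_noncrossing (hle : ArcCutLE m τ) (hm : IsMatching m) (hτ : IsMatching τ)
    (hnc : ∀ a b, ¬ CyclicOrder4 a b (τ a) (τ b)) : m = τ := by
  have closed (p x : Fin N) (hx : x ∈ cIcc p (τ p)) : τ x ∈ cIcc p (τ p) := by
    by_contra hτx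
    have hxp : x ≠ p := fun h => hτx (h ▸ right_mem_cIcc p (τ p))
    have hxτp : x ≠ τ p := fun h => hτx (by rw [h, hτ.1]; exact left_mem_cIcc _ _)
    apply hnc p x
    rw [mem_cIcc, not_le] at hτx
    refine cyclicOrder4_iff.2 ⟨Ne.symm hxp, ?_, hτx⟩
    exact lt_of_le_of_ne (mem_cIcc.1 hx) ((fin_sub_injective p).ne hxτp)
  have stable (p : Fin N) : ∀ x ∈ cIcc p (τ p), m x ∈ cIcc p (τ p) :=
    cut_eq_zero_iff.1 (Nat.le_zero.1 (hle _ (isArc_cIcc _ _) |>.trans_eq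
      (cut_eq_zero_iff.2 (closed p))))
  funext p
  have h₁ : m p ∈ cIcc p (τ p) := stable p p (left_mem_cIcc _ _)
  have h₂ : m p ∈ cIcc (τ p) p := by
    have := stable (τ p) p
    rw [hτ.1] at this
    exact this (right_mem_cIcc _ _)
  have := hm.2 p
  rw [mem_cIcc, fin_sub_le_sub_iff] at h₁ h₂
  omega

theorem ArcCutLE.uncrossLE (hle : ArcCutLE m τ) (hm : IsMatching m) (hnc : IsNCMatching m)
    (hτ : IsMatching τ) : uncrossLE m τ := by
  induction hk : ∑ S with IsArc S, cut τ S using Nat.strong_induction_on generalizing τ with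
  | _ k ih =>
  by_cases hex : ∃ a b, CyclicOrder4 a b (τ a) (τ b)
  · obtain ⟨a, b, hab, slack⟩ : ∃ a b, CyclicOrder4 a b (τ a) (τ b) ∧ HasSlack m τ a b := by
      obtain ⟨a, b, hab⟩ := hex
      rcases hle.hasSlack_or hm hnc hτ a b with slack | slack
      · exact ⟨a, b, hab, slack⟩
      · exact ⟨b, τ a, by rw [hτ.1]; exact hab.rotate, slack⟩
    obtain ⟨b, hab, slack, cover⟩ := exists_uncrossCover_of_hasSlack hτ hab slack
    exact .tail (ih _ (hk ▸ cover.sum_cut_lt) (hle.uncross hm hτ hab slack)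
      (isMatching_uncross hτ a b) rfl) cover
  · push Not at hex
    rw [hle.eq_of_noncrossing hm hτ hex]
    exact .refl

theorem uncrossLE_iff_arcCutLE (hm : IsMatching m) (hnc : IsNCMatching m) (hτ : IsMatching τ) :
    uncrossLE m τ ↔ ArcCutLE m τ :=
  ⟨uncrossLE.arcCutLE, fun h => h.uncrossLE hm hnc hτ⟩

end Uncrossing

section Necklace

theorem orderEmbOfFin_le_iff {α : Type*} [LinearOrder α] {k : ℕ} {I : Finset α} (hI : #I = k)
    (r : Fin k) (t : α) : I.orderEmbOfFin hI r ≤ t ↔ (r : ℕ) < #{x ∈ I | x ≤ t} := by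
  constructor
  · intro h
    have : (Iic r).map (I.orderEmbOfFin hI).toEmbedding ⊆ {x ∈ I | x ≤ t} := by
      intro x
      simp only [mem_map, mem_Iic, mem_filter]
      rintro ⟨s, hs, rfl⟩
      exact ⟨orderEmbOfFin_mem I hI s, ((I.orderEmbOfFin hI).monotone hs).trans h⟩
    simpa [Nat.succ_le_iff] using card_le_card this
  · contrapose!
    intro h
    have : {x ∈ I | x ≤ t} ⊆ (Iio r).map (I.orderEmbOfFin hI).toEmbedding := by
      intro x hx
      obtain ⟨hxI, hxt⟩ := mem_filter.1 hx
      obtain ⟨s, rfl⟩ : x ∈ Set.range (I.orderEmbOfFin hI) := by rwa [range_orderEmbOfFin]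
      exact mem_map_of_mem _ (mem_Iio.2 ((I.orderEmbOfFin hI).lt_iff_lt.1 (hxt.trans_lt h)))
    simpa using card_le_card this

variable {N k : ℕ}

theorem domLE_iff {I J : Finset (Fin N)} :
    domLE k I J ↔ #I = k ∧ #J = k ∧ ∀ t, #{x ∈ J | x ≤ t} ≤ #{x ∈ I | x ≤ t} := by
  constructor
  · rintro ⟨hI, hJ, h⟩
    refine ⟨hI, hJ, fun t => le_of_not_gt fun hlt => ?_⟩
    let r : Fin k := ⟨#{x ∈ I | x ≤ t}, hlt.trans_le ((card_filter_le _ _).trans_eq hJ)⟩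
    exact ((orderEmbOfFin_le_iff hI r t).1
      ((h r).trans ((orderEmbOfFin_le_iff hJ r t).2 hlt))).false
  · rintro ⟨hI, hJ, h⟩
    exact ⟨hI, hJ, fun r => (orderEmbOfFin_le_iff hI r _).2
      (((orderEmbOfFin_le_iff hJ r _).1 le_rfl).trans_le (h _))⟩

theorem sdomLE_iff {a : Fin N} {I J : Finset (Fin N)} :
    sdomLE k a I J ↔ #I = k ∧ #J = k ∧ ∀ b, #(J ∩ cIcc a b) ≤ #(I ∩ cIcc a b) := by
  have : NeZero N := ⟨a.pos.ne'⟩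
  have count (I : Finset (Fin N)) (b : Fin N) :
      #{x ∈ I.image (· - a) | x ≤ b - a} = #(I ∩ cIcc a b) := by
    rw [filter_image, card_image_of_injective _ (fin_sub_injective a), cIcc, inter_filter,
      inter_univ]
  rw [sdomLE, domLE_iff, card_image_of_injective _ (fin_sub_injective a),
    card_image_of_injective _ (fin_sub_injective a), (Equiv.subRight a).surjective.forall]
  simp only [Equiv.subRight_apply, count]

variable {m τ : Fin N → Fin N}

/-- The points of the matching `τ` that precede their partner when `[N]` is read clockwise
from `a`. -/
def openers (τ : Fin N → Fin N) (a : Fin N) : Finset (Fin N) :=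
  univ.filter fun p => p - a < τ p - a

theorem mem_openers {a p : Fin N} : p ∈ openers τ a ↔ p - a < τ p - a := mem_filter_univ p

theorem left_mem_openers (hτ : IsMatching τ) (a : Fin N) : a ∈ openers τ a :=
  mem_openers.2 (fin_sub_self_lt (hτ.2 a).symm)

theorem two_mul_card_openers (hτ : IsMatching τ) (a : Fin N) : 2 * #(openers τ a) = N := by
  have := card_eq_cut_add hτ.1 hτ.2 (fin_sub_injective a) univ
  simpa [cut, openers] using this.symm

theorem two_mul_card_openers_inter (hτ : IsMatching τ) (a b : Fin N) :
    2 * #(openers τ a ∩ cIcc a b) = cut τ (cIcc a b) + #(cIcc a b) := by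
  have split : openers τ a ∩ cIcc a b = {i ∈ cIcc a b | τ i ∉ cIcc a b} ∪
      {i ∈ cIcc a b | τ i ∈ cIcc a b ∧ i - a < τ i - a} := by
    ext i
    simp only [mem_inter, mem_union, mem_filter, mem_openers, mem_cIcc]
    grind
  have disj : Disjoint ({i ∈ cIcc a b | τ i ∉ cIcc a b} : Finset (Fin N))
      {i ∈ cIcc a b | τ i ∈ cIcc a b ∧ i - a < τ i - a} :=
    disjoint_filter.2 fun i _ h h' => h h'.1
  rw [split, card_union_of_disjoint disj]
  have := card_eq_cut_add hτ.1 hτ.2 (fin_sub_injective a) (cIcc a b)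
  unfold cut at *
  omega

theorem arcCutLE_iff_card_openers (hm : IsMatching m) (hτ : IsMatching τ) :
    ArcCutLE m τ ↔ ∀ a b, #(openers m a ∩ cIcc a b) ≤ #(openers τ a ∩ cIcc a b) := by
  have key (a b : Fin N) : cut m (cIcc a b) ≤ cut τ (cIcc a b) ↔
      #(openers m a ∩ cIcc a b) ≤ #(openers τ a ∩ cIcc a b) := by
    have := two_mul_card_openers_inter hm a b
    have := two_mul_card_openers_inter hτ a b
    omega
  simp only [← key]
  refine ⟨fun h a b => h _ (isArc_cIcc a b), fun h S hS => ?_⟩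
  rcases S.eq_empty_or_nonempty with rfl | hne
  · simp [cut]
  by_cases huniv : S = univ
  · simp [cut, huniv]
  obtain ⟨a, b, rfl⟩ := hS.eq_cIcc hne huniv
  exact h a b

variable [NeZero N]

theorem fin_val_add_one (x : Fin N) :
    ((x + 1 : Fin N) : ℕ) = if (x : ℕ) + 1 = N then 0 else (x : ℕ) + 1 := by
  have := x.isLt
  rw [Fin.val_add, Fin.val_one', Nat.add_mod_mod]
  split_ifs with h
  · rw [h, Nat.mod_self]
  · exact Nat.mod_eq_of_lt (by omega)

theorem fin_add_one_sub_le_iff {a x y : Fin N} (hx : x + 1 ≠ a) (hy : y + 1 ≠ a) :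
    x + 1 - a ≤ y + 1 - a ↔ x - a ≤ y - a := by
  have hx' := fin_val_add_one x
  have hy' := fin_val_add_one y
  rw [fin_sub_le_sub_iff, fin_sub_le_sub_iff]
  split_ifs at hx' hy' <;> omega

/-- The Grassmann necklace set `I_a` of the matching `τ`: the openers seen from `a`, other than `a`,
moved one step back. -/
def matchingNecklace (τ : Fin N → Fin N) (a : Fin N) : Finset (Fin N) :=
  univ.filter fun x => x + 1 ≠ a ∧ x + 1 ∈ openers τ a

theorem mem_matchingNecklace {a x : Fin N} :
    x ∈ matchingNecklace τ a ↔ x + 1 ≠ a ∧ x + 1 ∈ openers τ a := mem_filter_univ x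

theorem mem_matchingNecklace_iff_sub_lt (hτ : IsMatching τ) {a x : Fin N} :
    x ∈ matchingNecklace τ a ↔ x - a < τ (x + 1) - a := by
  have hx := fin_val_add_one x
  have hne := hτ.2 (x + 1)
  simp only [mem_matchingNecklace, mem_openers, ← not_le, fin_sub_le_sub_iff]
  split_ifs at hx <;> omega

theorem card_matchingNecklace_add_one (hτ : IsMatching τ) (a : Fin N) :
    #(matchingNecklace τ a) + 1 = #(openers τ a) := by
  rw [← card_erase_add_one (left_mem_openers hτ a)]
  congr 1
  exact card_equiv (Equiv.addRight 1) (by simp [mem_matchingNecklace])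

theorem card_matchingNecklace_inter_add_one (hτ : IsMatching τ) {a b : Fin N} (h : b + 1 ≠ a) :
    #(matchingNecklace τ a ∩ cIcc a b) + 1 = #(openers τ a ∩ cIcc a (b + 1)) := by
  rw [← card_erase_add_one (mem_inter.2 ⟨left_mem_openers hτ a, left_mem_cIcc a _⟩)]
  congr 1
  refine card_equiv (Equiv.addRight 1) fun x => ?_
  simp only [mem_inter, mem_erase, mem_matchingNecklace, mem_cIcc, Equiv.coe_addRight]
  have (hx : x + 1 ≠ a) := fin_add_one_sub_le_iff hx h
  tauto

theorem arcCutLE_iff_sdomLE (hm : IsMatching m) (hτ : IsMatching τ) :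
    ArcCutLE m τ ↔ ∀ a, sdomLE (N / 2 - 1) a (matchingNecklace τ a) (matchingNecklace m a) := by
  have card_eq {ρ : Fin N → Fin N} (hρ : IsMatching ρ) (a : Fin N) :
      #(matchingNecklace ρ a) = N / 2 - 1 := by
    have := card_matchingNecklace_add_one hρ a
    have := two_mul_card_openers hρ a
    omega
  simp only [arcCutLE_iff_card_openers hm hτ, sdomLE_iff, card_eq hm, card_eq hτ, true_and]
  refine forall_congr' fun a => ?_
  rw [(Equiv.addRight (1 : Fin N)).surjective.forall]
  refine forall_congr' fun b => ?_
  by_cases hb : b + 1 = a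
  · have singleton : cIcc a (b + 1) = {a} := by
      ext x
      rw [mem_cIcc, fin_sub_le_sub_iff, mem_singleton, hb]
      omega
    have full : cIcc a b = univ := by
      ext x
      have hval := fin_val_add_one b
      simp only [mem_cIcc, fin_sub_le_sub_iff, mem_univ, iff_true]
      split_ifs at hval <;> omega
    simp [singleton, full, left_mem_openers hm a, left_mem_openers hτ a, card_eq hm, card_eq hτ]
  · simp only [Equiv.coe_addRight, ← card_matchingNecklace_inter_add_one hm hb,
      ← card_matchingNecklace_inter_add_one hτ hb, Nat.add_le_add_iff_right]

end Necklace

section AffinePermutation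

theorem int_emod_eq_iff {M r z : ℤ} (hr : 0 ≤ r) (hrM : r < M) (hz : -M ≤ z) (hzM : z < 2 * M) :
    z % M = r ↔ z = r ∨ z = r - M ∨ z = r + M := by
  rw [Int.emod_eq_iff (by omega), dvd_def]
  constructor
  · rintro ⟨_, _, c, hc⟩
    have : c < 2 := by nlinarith
    have : -2 < c := by nlinarith
    interval_cases c <;> omega
  · rintro (h | h | h)
    · exact ⟨hr, by omega, 0, by omega⟩
    · exact ⟨hr, by omega, 1, by omega⟩
    · exact ⟨hr, by omega, -1, by omega⟩

theorem exists_fin_emod_eq {N : ℕ} [NeZero N] (b : ℤ) : ∃ r : Fin N, b % N = (r : ℕ) := by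
  have hN : (0 : ℤ) < N := by exact_mod_cast NeZero.pos N
  have nonneg := Int.emod_nonneg b hN.ne'
  exact ⟨⟨(b % N).toNat, (Int.toNat_lt nonneg).2 (Int.emod_lt_of_pos b hN)⟩,
    (Int.toNat_of_nonneg nonneg).symm⟩

variable {n : ℕ} {τ : Fin (2 * n) → Fin (2 * n)}

theorem gTau_eq {b : ℤ} {r : Fin (2 * n)} (h : b % ((2 * n : ℕ) : ℤ) = (r : ℕ)) :
    gTau n τ b = b - (r : ℕ) + if r < τ r then ((τ r : ℕ) : ℤ) else (τ r : ℕ) + 2 * n := by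
  simp only [gTau, h, Int.toNat_natCast, Fin.is_lt, dite_true]

theorem necklaceI_fTau [NeZero n] (hτ : IsMatching τ) (a : Fin (2 * n)) :
    necklaceI (2 * n) (fTau n τ) (a : ℕ) = matchingNecklace τ a := by
  ext x
  have hx := fin_val_add_one x
  have hxr : ∀ r, τ r = x + 1 ↔ τ (x + 1) = r := fun r => hτ.1.eq_iff.trans eq_comm
  simp only [necklaceI, fTau, mem_filter_univ, mem_matchingNecklace, mem_openers,
    ← not_le, fin_sub_le_sub_iff]
  constructor
  · rintro ⟨b, hba, hab, hbx⟩
    obtain ⟨r, hr⟩ := exists_fin_emod_eq (N := 2 * n) b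
    rw [gTau_eq hr] at hab hbx
    have hne := hτ.2 r
    rw [int_emod_eq_iff (by omega) (by omega) (by split_ifs at * <;> omega)
      (by split_ifs at * <;> omega)] at hr
    rw [int_emod_eq_iff (by omega) (by omega) (by split_ifs at * <;> omega)
      (by split_ifs at * <;> omega)] at hbx
    have hτr : τ r = x + 1 := Fin.ext (by split_ifs at * <;> omega)
    rw [hτr] at hne hab hbx
    rw [(hxr r).1 hτr]
    split_ifs at * <;> omega
  · rintro ⟨hxa, hopen⟩
    obtain ⟨r, hr⟩ : ∃ r, τ (x + 1) = r := ⟨_, rfl⟩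
    have hτr := (hxr r).2 hr
    have hne := hτ.2 r
    rw [hr] at hopen
    rw [hτr] at hne
    -- the representative of `r` in the window `[a - 2n, a)`
    refine ⟨if r < a then (r : ℕ) else (r : ℕ) - (2 * n : ℕ), by split_ifs <;> omega, ?_⟩
    rw [gTau_eq (r := r), hτr, int_emod_eq_iff (by omega) (by omega)]
    · split_ifs at * <;> omega
    · split_ifs at * <;> omega
    · split_ifs at * <;> omega
    · rw [int_emod_eq_iff (by omega) (by omega)] <;> split_ifs <;> omega

end AffinePermutation

section MedialPairing

variable {n : ℕ} {σ : NCP n} {i j k u v : Fin n}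

theorem mem_iff_sameBlock {B : Finset (Fin n)} (hB : B ∈ σ.parts) (hi : i ∈ B) :
    j ∈ B ↔ sameBlock σ i j := by
  refine ⟨fun hj => ⟨B, hB, hi, hj⟩, ?_⟩
  rintro ⟨C, hC, hiC, hjC⟩
  rwa [σ.eq_of_mem_parts hB hC hi hiC]

theorem sameBlock.symm (h : sameBlock σ i j) : sameBlock σ j i := by
  obtain ⟨B, hB, hi, hj⟩ := h
  exact ⟨B, hB, hj, hi⟩

theorem sameBlock.trans (hij : sameBlock σ i j) (hjk : sameBlock σ j k) : sameBlock σ i k := by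
  obtain ⟨B, hB, hi, hj⟩ := hij
  exact ⟨B, hB, hi, (mem_iff_sameBlock hB hj).2 hjk⟩

theorem IsNoncrossing.sameBlock_of_cyclicOrder4 (hσ : IsNoncrossing σ) {a b c d : Fin n}
    (h : CyclicOrder4 a b c d) (hac : sameBlock σ a c) (hbd : sameBlock σ b d) :
    sameBlock σ a b := by
  rcases h with ⟨h₁, h₂, h₃⟩ | ⟨h₁, h₂, h₃⟩ | ⟨h₁, h₂, h₃⟩ | ⟨h₁, h₂, h₃⟩
  · exact hσ a b c d h₁ h₂ h₃ hac hbd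
  · exact hac.trans (hσ b c d a h₁ h₂ h₃ hbd hac.symm).symm
  · exact (hac.trans (hσ c d a b h₁ h₂ h₃ hac.symm hbd.symm)).trans hbd.symm
  · exact (hbd.trans (hσ d a b c h₁ h₂ h₃ hbd.symm hac)).symm

theorem cyclicPred_iff :
    cyclicPred σ j i ↔ sameBlock σ i j ∧ ∀ x, sameBlock σ i x → x ∉ cIoo j i := by
  constructor
  · rintro ⟨B, hB, hi, hj, h⟩
    exact ⟨⟨B, hB, hi, hj⟩, fun x hx => h x ((mem_iff_sameBlock hB hi).2 hx)⟩
  · rintro ⟨⟨B, hB, hi, hj⟩, h⟩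
    exact ⟨B, hB, hi, hj, fun x hx => h x ⟨B, hB, hi, hx⟩⟩

theorem exists_cyclicPred (σ : NCP n) (i : Fin n) : ∃ j, cyclicPred σ j i := by
  obtain ⟨B, hB, hi⟩ := σ.exists_mem (mem_univ i)
  obtain ⟨j, hj, last⟩ := B.exists_max_image (· - i) ⟨i, hi⟩
  exact ⟨j, B, hB, hi, hj, fun x hx => by rw [mem_cIoo]; exact (last x hx).not_gt⟩

theorem exists_cyclicSucc (σ : NCP n) (j : Fin n) : ∃ i, cyclicPred σ j i := by
  have : NeZero n := ⟨j.pos.ne'⟩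
  obtain ⟨B, hB, hj⟩ := σ.exists_mem (mem_univ j)
  obtain ⟨i, hi, first⟩ := B.exists_min_image (· - (j + 1)) ⟨j, hj⟩
  refine ⟨i, B, hB, hi, hj, fun x hx => ?_⟩
  have hij := first j hj
  have hix := first x hx
  have hj' := fin_val_add_one j
  rw [fin_sub_le_sub_iff] at hij hix
  rw [mem_cIoo, not_lt, fin_sub_le_sub_iff]
  split_ifs at hj' <;> omega

theorem dualRel_iff : dualRel σ i j ↔
    ∀ u v, sameBlock σ u v → ((u ≤ i ↔ v ≤ i) ↔ (u ≤ j ↔ v ≤ j)) := by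
  have unfolded : dualRel σ i j ↔ i = j ∨ ∀ u v, sameBlock σ u v → u ∈ cIoc i j → v ∉ cIoc j i := by
    simp only [dualRel, sameBlock, Finset.Nonempty, mem_inter]
    grind
  rw [unfolded]
  by_cases hij : i = j
  · simp [hij]
  simp only [hij, false_or, cIoc, mem_filter_univ]
  refine ⟨fun h u v huv => ?_, fun h u v huv => ?_⟩
  · have := h u v huv
    have := h v u huv.symm
    split_ifs at * <;> omega
  · have := h u v huv
    split_ifs at * <;> omega

theorem dualRel.filter_eq (h : dualRel σ i j) :
    univ.filter (dualRel σ i) = univ.filter (dualRel σ j) := by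
  rw [dualRel_iff] at h
  ext k
  simp only [mem_filter_univ, dualRel_iff]
  exact ⟨fun hk u v huv => (h u v huv).symm.trans (hk u v huv),
    fun hk u v huv => (h u v huv).trans (hk u v huv)⟩

theorem IsNoncrossing.mem_cIoo_of_sameBlock (hσ : IsNoncrossing σ) (hpred : cyclicPred σ j i)
    (huv : sameBlock σ u v) (hu : u ∈ cIoo j i) : v ∈ cIoo j i := by
  obtain ⟨hij, hgap⟩ := cyclicPred_iff.1 hpred
  by_contra hv
  have hiu : ¬ sameBlock σ i u := fun h => hgap u h hu
  have hiv : i ≠ v := fun h => hiu (h ▸ huv.symm)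
  have hjv : j ≠ v := fun h => hiu (hij.trans (h ▸ huv.symm))
  have order : CyclicOrder4 j u i v := by
    simp only [cIoo, mem_filter_univ] at hu hv
    unfold CyclicOrder4
    split_ifs at hu hv <;> omega
  exact hiu (hij.trans (hσ.sameBlock_of_cyclicOrder4 order hij.symm huv))

theorem IsNoncrossing.dualRel_of_cyclicPred [NeZero n] (hσ : IsNoncrossing σ)
    (hpred : cyclicPred σ j (k + 1)) : dualRel σ k j := by
  rw [dualRel_iff]
  intro u v huv
  have hk := fin_val_add_one k
  have := hσ.mem_cIoo_of_sameBlock hpred huv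
  have := hσ.mem_cIoo_of_sameBlock hpred huv.symm
  simp only [cIoo, mem_filter_univ] at *
  split_ifs at * <;> omega

theorem dualRel.notMem_cIoo [NeZero n] (h : dualRel σ k u) (hpred : cyclicPred σ j (k + 1)) :
    u ∉ cIoo k j := by
  have hk := fin_val_add_one k
  have := dualRel_iff.1 h _ _ (cyclicPred_iff.1 hpred).1
  simp only [cIoo, mem_filter_univ]
  split_ifs at * <;> omega

end MedialPairing

section Doubling

variable {n : ℕ}

theorem bar_injective : Function.Injective (bar (n := n)) := fun i j h => by
  have := congrArg Fin.val h
  simp only [bar] at this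
  omega

theorem til_injective : Function.Injective (til (n := n)) := fun i j h => by
  have := congrArg Fin.val h
  simp only [til] at this
  omega

theorem bar_ne_til (i j : Fin n) : bar i ≠ til j := by
  simp only [bar, til, ne_eq, Fin.mk.injEq]
  omega

theorem eq_bar_or_eq_til (x : Fin (2 * n)) : (∃ k, x = bar k) ∨ ∃ k, x = til k := by
  rcases Nat.even_or_odd' (x : ℕ) with ⟨k, hk | hk⟩
  · exact .inl ⟨⟨k, by omega⟩, Fin.ext hk⟩
  · exact .inr ⟨⟨k, by omega⟩, Fin.ext hk⟩

theorem bar_add_one [NeZero n] (k : Fin n) : bar k + 1 = til k := by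
  have hk := fin_val_add_one (bar k)
  split_ifs at hk <;> simp only [bar, til, Fin.ext_iff] at * <;> omega

theorem til_add_one [NeZero n] (k : Fin n) : til k + 1 = bar (k + 1) := by
  have hk := fin_val_add_one k
  have htil := fin_val_add_one (til k)
  split_ifs at * <;> simp only [bar, til, Fin.ext_iff] at * <;> omega

theorem bar_mem_cIoo {x y z : Fin n} : bar y ∈ cIoo (bar x) (bar z) ↔ y ∈ cIoo x z := by
  simp only [cIoo, bar, mem_filter_univ, Fin.mk_lt_mk, ne_eq, Fin.mk.injEq]
  split_ifs <;> omega

theorem til_mem_cIoo {x y z : Fin n} : til y ∈ cIoo (til x) (til z) ↔ y ∈ cIoo x z := by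
  simp only [cIoo, til, mem_filter_univ, Fin.mk_lt_mk, ne_eq, Fin.mk.injEq]
  split_ifs <;> omega

end Doubling

section MedialNecklace

variable {n : ℕ} {σ : NCP n} {m : Fin (2 * n) → Fin (2 * n)} {i j i' j' : Fin n}

theorem IsMedialOf.apply_til (hmed : IsMedialOf σ m) (hm : IsMatching m)
    (hpred : cyclicPred σ j i) : m (til j) = bar i := by
  rw [← (hmed i j).2 hpred, hm.1]

theorem IsNoncrossing.not_cyclicOrder4_of_cyclicPred (hσ : IsNoncrossing σ)
    (hpred : cyclicPred σ j i) (hpred' : cyclicPred σ j' i') :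
    ¬ CyclicOrder4 (bar i) (bar i') (til j) (til j') := by
  intro order
  obtain ⟨hij, hgap⟩ := cyclicPred_iff.1 hpred
  have hij' := (cyclicPred_iff.1 hpred').1
  simp only [CyclicOrder4, bar, til, Fin.mk_lt_mk] at order
  have hii' : sameBlock σ i i' := by
    by_cases h : i' = j
    · rwa [h]
    · refine hσ.sameBlock_of_cyclicOrder4 (c := j) (d := j') ?_ hij hij'
      unfold CyclicOrder4
      omega
  refine hgap j' (hii'.trans hij') ?_
  simp only [cIoo, mem_filter_univ]
  split_ifs <;> omega

theorem IsMedialOf.isNCMatching (hmed : IsMedialOf σ m) (hm : IsMatching m)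
    (hσ : IsNoncrossing σ) : IsNCMatching m := by
  have not_crossing (i i' : Fin n) : ¬ CyclicOrder4 (bar i) (bar i') (m (bar i)) (m (bar i')) := by
    obtain ⟨j, hj⟩ := exists_cyclicPred σ i
    obtain ⟨j', hj'⟩ := exists_cyclicPred σ i'
    rw [(hmed i j).2 hj, (hmed i' j').2 hj']
    exact hσ.not_cyclicOrder4_of_cyclicPred hj hj'
  have exists_bar (x : Fin (2 * n)) : ∃ i, x = bar i ∨ x = m (bar i) := by
    rcases eq_bar_or_eq_til x with ⟨i, rfl⟩ | ⟨j, rfl⟩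
    · exact ⟨i, .inl rfl⟩
    · obtain ⟨i, hi⟩ := exists_cyclicSucc σ j
      exact ⟨i, .inr ((hmed i j).2 hi).symm⟩
  rintro ⟨a, b, c, d, hab, hbc, hcd, rfl, rfl⟩
  have order : CyclicOrder4 a b (m a) (m b) := .inl ⟨hab, hbc, hcd⟩
  obtain ⟨i, rfl | rfl⟩ := exists_bar a <;> obtain ⟨i', rfl | rfl⟩ := exists_bar b
  · exact not_crossing _ _ order
  · rw [hm.1] at order
    exact not_crossing _ _ order.rotate.rotate.rotate
  · rw [hm.1] at order
    exact not_crossing _ _ order.rotate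
  · rw [hm.1, hm.1] at order
    exact not_crossing _ _ order.rotate.rotate

theorem bar_mem_IaP_iff (hpred : cyclicPred σ j i) (a : Fin (2 * n)) :
    bar j ∈ IaP σ a ↔ bar j - a < bar i - a := by
  obtain ⟨B, hB, hi, hj, gap⟩ := hpred
  have hmax : bar j ∈ maxAt a (B.image bar) ↔ bar i - a ≤ bar j - a := by
    refine mem_maxAt_iff_of_gap (mem_image_of_mem _ hj) (mem_image_of_mem _ hi) ?_ a
    exact forall_mem_image.2 fun x hx => bar_mem_cIoo.not.2 (gap x hx)
  have unique : ∀ C ∈ σ.parts, bar j ∈ maxAt a (C.image bar) → C = B := by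
    intro C hC hjC
    exact σ.eq_of_mem_parts hC hB (bar_injective.mem_finset_image.1 (mem_filter.1 hjC).1) hj
  have not_til (k : Fin n) : bar j ∉ maxAt a ((univ.filter (dualRel σ k)).image til) := by
    simp [maxAt, (bar_ne_til j _).symm]
  rw [← not_le, ← hmax]
  simp only [IaP, mem_sdiff, mem_univ, true_and, mem_union, mem_biUnion, not_til,
    exists_false, and_false, or_false]
  exact not_congr ⟨fun ⟨C, hC, hjC⟩ => unique C hC hjC ▸ hjC, fun h => ⟨B, hB, h⟩⟩

theorem til_mem_IaP_iff [NeZero n] (hσ : IsNoncrossing σ) (hpred : cyclicPred σ j (i + 1))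
    (a : Fin (2 * n)) : til i ∈ IaP σ a ↔ til i - a < til j - a := by
  have hij := hσ.dualRel_of_cyclicPred hpred
  have hmax : til i ∈ maxAt a ((univ.filter (dualRel σ i)).image til) ↔ til j - a ≤ til i - a := by
    refine mem_maxAt_iff_of_gap (mem_image_of_mem _ ?_) (mem_image_of_mem _ ?_) ?_ a
    · exact (mem_filter_univ i).2 (.inl rfl)
    · exact (mem_filter_univ j).2 hij
    · refine forall_mem_image.2 fun x hx => til_mem_cIoo.not.2 ?_
      exact dualRel.notMem_cIoo ((mem_filter_univ x).1 hx) hpred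
  have unique (k : Fin n) (hk : til i ∈ maxAt a ((univ.filter (dualRel σ k)).image til)) :
      univ.filter (dualRel σ k) = univ.filter (dualRel σ i) := by
    have := til_injective.mem_finset_image.1 (mem_filter.1 hk).1
    exact ((mem_filter_univ i).1 this).filter_eq
  have not_bar (B : Finset (Fin n)) : til i ∉ maxAt a (B.image bar) := by
    simp [maxAt, bar_ne_til]
  rw [← not_le, ← hmax]
  simp only [IaP, mem_sdiff, mem_univ, true_and, mem_union, mem_biUnion, not_bar,
    and_false, exists_false, false_or]
  exact not_congr ⟨fun ⟨k, hk⟩ => unique k hk ▸ hk, fun h => ⟨i, h⟩⟩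

theorem IsMedialOf.IaP_eq_matchingNecklace [NeZero n] (hmed : IsMedialOf σ m) (hm : IsMatching m)
    (hσ : IsNoncrossing σ) (a : Fin (2 * n)) : IaP σ a = matchingNecklace m a := by
  ext x
  rw [mem_matchingNecklace_iff_sub_lt hm]
  rcases eq_bar_or_eq_til x with ⟨j, rfl⟩ | ⟨k, rfl⟩
  · obtain ⟨i, hpred⟩ := exists_cyclicSucc σ j
    rw [bar_mem_IaP_iff hpred, bar_add_one, hmed.apply_til hm hpred]
  · obtain ⟨j, hpred⟩ := exists_cyclicPred σ (k + 1)
    rw [til_mem_IaP_iff hσ hpred, til_add_one, (hmed _ _).2 hpred]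

end MedialNecklace

theorem stmt18 (n : ℕ) (hn : 0 < n) (τ : Fin (2*n) → Fin (2*n)) (hτ : IsMatching τ)
    (σ : NCP n) (hσ : IsNoncrossing σ)
    (mσ : Fin (2*n) → Fin (2*n)) (hm : IsMatching mσ) (hmed : IsMedialOf σ mσ) :
    uncrossLE mσ τ ↔
      ∀ a : Fin (2*n),
        sdomLE (n-1) a (necklaceI (2*n) (fTau n τ) ((a:ℕ):ℤ)) (IaP σ a) := by
  have : NeZero n := ⟨hn.ne'⟩
  have half : 2 * n / 2 - 1 = n - 1 := by omega
  rw [uncrossLE_iff_arcCutLE hm (hmed.isNCMatching hm hσ) hτ, arcCutLE_iff_sdomLE hm hτ, half]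
  simp only [necklaceI_fTau hτ, hmed.IaP_eq_matchingNecklace hm hσ]

end
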